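/- Let A ⊆ B be a C*-inclusion and F ⊆ A⁺ a subset of the positive cone of A. Then F residually supports B if and only if for every induced ideal J of B the image of F in B/J supports B/J, i.e. for every b ∈ B⁺ with b ∉ J there is a ∈ F with a ∉ J such that for every ε > 0 there is x ∈ B with dist(a − x* b x, J) < ε. -/

import Mathlib

/- Common definitions for C*-inclusions, ideals, Cuntz subequivalence,
   supporting/filling families and pure infiniteness. -/

namespace KM

variable {B : Type*} [NonUnitalCStarAlgebra B] [PartialOrder B]

/-- `J` is a closed two-sided ideal of the C*-algebra `C` (given as a subset of `B`). -/
def IsIdealIn (C J : Set B) : Prop :=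
  J ⊆ C ∧ IsClosed J ∧ (0 : B) ∈ J ∧ (∀ x ∈ J, ∀ y ∈ J, x + y ∈ J) ∧
    (∀ (c : ℂ), ∀ x ∈ J, c • x ∈ J) ∧ (∀ x ∈ J, ∀ c ∈ C, c * x ∈ J ∧ x * c ∈ J)

/-- `J` is a closed two-sided ideal of `B`. -/
def IsIdeal (J : Set B) : Prop := IsIdealIn Set.univ J

/-- `A` is a C*-subalgebra of `B`: a closed `*`-subalgebra. -/
def IsSubCStar (A : Set B) : Prop :=
  IsClosed A ∧ (0 : B) ∈ A ∧ (∀ x ∈ A, ∀ y ∈ A, x + y ∈ A) ∧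
    (∀ (c : ℂ), ∀ x ∈ A, c • x ∈ A) ∧ (∀ x ∈ A, ∀ y ∈ A, x * y ∈ A) ∧
    (∀ x ∈ A, star x ∈ A)

/-- The smallest closed two-sided ideal of the C*-algebra `C` containing `S`. -/
def idealGenIn (C S : Set B) : Set B := ⋂₀ {J : Set B | IsIdealIn C J ∧ S ⊆ J}

/-- The smallest closed two-sided ideal of `B` containing `S`; for an ideal `I` of a
subalgebra `A` this is the induced ideal `BIB`. -/
def idealGen (S : Set B) : Set B := idealGenIn Set.univ S

/-- `I` is a restricted ideal of the subalgebra `A`, i.e. `I = J ∩ A` for an ideal `J` of `B`. -/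
def IsRestricted (A I : Set B) : Prop := ∃ J : Set B, IsIdeal J ∧ I = J ∩ A

/-- `J` is an induced ideal of `B`: `J = BIB` for some ideal `I` of `A`. -/
def IsInduced (A J : Set B) : Prop := ∃ I : Set B, IsIdealIn A I ∧ J = idealGen I

/-- `A` separates ideals in `B`. -/
def SeparatesIdeals (A : Set B) : Prop :=
  ∀ J₁ J₂ : Set B, IsIdeal J₁ → IsIdeal J₂ → J₁ ∩ A = J₂ ∩ A → J₁ = J₂

/-- Cuntz subequivalence `a ≼ b`. -/
def CuntzBelow (a b : B) : Prop :=
  ∀ ε : ℝ, 0 < ε → ∃ x : B, ‖a - star x * b * x‖ < ε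

/-- `F` supports `B`. -/
def Supports (F : Set B) : Prop :=
  ∀ b : B, 0 ≤ b → b ≠ 0 → ∃ a ∈ F, a ≠ 0 ∧ CuntzBelow a b

/-- `F` residually supports the C*-algebra `C ⊆ B`: for every ideal `J` of `C`, the image
of `F` in `C/J` supports `C/J`, phrased concretely via the distance to `J`. -/
def ResiduallySupportsIn (C F : Set B) : Prop :=
  ∀ J : Set B, IsIdealIn C J → ∀ b ∈ C, 0 ≤ b → b ∉ J →
    ∃ a ∈ F, a ∉ J ∧ ∀ ε : ℝ, 0 < ε → ∃ x ∈ C,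
      Metric.infDist (a - star x * b * x) J < ε

/-- `F` residually supports `B`. -/
def ResiduallySupports (F : Set B) : Prop := ResiduallySupportsIn Set.univ F

/-- `x` lies in `aB = {a c : c ∈ B}`. -/
def MemRightMul (a x : B) : Prop := ∃ c : B, x = a * c

/-- `a` is properly infinite in `B`. -/
def ProperlyInfinite (a : B) : Prop :=
  ∀ ε : ℝ, 0 < ε → ∃ x y : B, MemRightMul a x ∧ MemRightMul a y ∧
    ‖star x * x - a‖ ≤ ε ∧ ‖star y * y - a‖ ≤ ε ∧ ‖star x * y‖ ≤ ε

/-- `a` is infinite in `B`. -/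
def InfiniteElt (a : B) : Prop :=
  ∃ b : B, 0 ≤ b ∧ b ≠ 0 ∧ ∀ ε : ℝ, 0 < ε → ∃ x y : B,
    MemRightMul a x ∧ MemRightMul a y ∧
    ‖star x * x - a‖ ≤ ε ∧ ‖star y * y - b‖ ≤ ε ∧ ‖star x * y‖ ≤ ε

/-- The pair `a, b` is separated in `B`. -/
def SeparatedPair (a b : B) : Prop :=
  ∀ ε : ℝ, 0 < ε → ∃ x y : B, MemRightMul a x ∧ MemRightMul b y ∧
    ‖star x * x - a‖ ≤ ε ∧ ‖star y * y - b‖ ≤ ε ∧ ‖star x * y‖ ≤ ε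

/-- A character of `B`: a nonzero multiplicative linear functional `B → ℂ`. -/
def IsCharacter (φ : B →ₗ[ℂ] ℂ) : Prop :=
  (∀ x y : B, φ (x * y) = φ x * φ y) ∧ φ ≠ 0

/-- `B` is purely infinite: it admits no characters and for nonzero positive `a, b`,
`a ≼ b` iff `a` lies in the ideal generated by `b`. -/
def PurelyInfinite (B : Type*) [NonUnitalCStarAlgebra B] [PartialOrder B] : Prop :=
  (¬ ∃ φ : B →ₗ[ℂ] ℂ, IsCharacter φ) ∧
    ∀ a b : B, 0 ≤ a → a ≠ 0 → 0 ≤ b → b ≠ 0 → (CuntzBelow a b ↔ a ∈ idealGen {b})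

/-- `p` is a projection. -/
def IsProjection (p : B) : Prop := star p = p ∧ p * p = p

/-- `B` has the ideal property: projections separate ideals. -/
def IdealProperty (B : Type*) [NonUnitalCStarAlgebra B] [PartialOrder B] : Prop :=
  ∀ J₁ J₂ : Set B, IsIdeal J₁ → IsIdeal J₂ →
    (∀ p : B, IsProjection p → (p ∈ J₁ ↔ p ∈ J₂)) → J₁ = J₂

/-- `B` is strongly purely infinite: every pair of positive elements is separated. -/
def StronglyPurelyInfinite (B : Type*) [NonUnitalCStarAlgebra B] [PartialOrder B] : Prop :=
  ∀ a b : B, 0 ≤ a → 0 ≤ b → SeparatedPair a b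

/-- `D` is a hereditary C*-subalgebra of `B`. -/
def IsHereditary (D : Set B) : Prop :=
  IsSubCStar D ∧ ∀ b d : B, d ∈ D → 0 ≤ b → b ≤ d → b ∈ D

/-- `F` fills `B`. -/
def Fills (F : Set B) : Prop :=
  ∀ D : Set B, IsHereditary D → (∃ d ∈ D, d ≠ 0) →
    ∀ J : Set B, IsIdeal J → ¬ D ⊆ J →
      ∃ z : B, z ∉ J ∧ z * star z ∈ D ∧ star z * z ∈ F

/-- Closed linear span of a subset of `B`. -/
def closSpan (S : Set B) : Set B := closure ↑(Submodule.span ℂ S)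

/-- The C*-inclusion `A ⊆ B` is symmetric. -/
def SymmetricInclusion (A : Set B) : Prop :=
  ∀ I : Set B, IsRestricted A I →
    closSpan {z : B | ∃ x ∈ I, ∃ b : B, z = x * b} =
      closSpan {z : B | ∃ b : B, ∃ x ∈ I, z = b * x}

/-- `b` is a normaliser of `A` in `B`. -/
def IsNormalizer (A : Set B) (b : B) : Prop :=
  (∀ a ∈ A, b * a * star b ∈ A) ∧ (∀ a ∈ A, star b * a * b ∈ A)

/-- The inclusion `A ⊆ B` is nondegenerate: the closed span of `A·B` is `B`. -/
def Nondegenerate (A : Set B) : Prop :=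
  closSpan {z : B | ∃ a ∈ A, ∃ b : B, z = a * b} = Set.univ

/-- The inclusion `A ⊆ B` is regular: nondegenerate and `B` is the closed linear span of
the normalisers of `A`. -/
def RegularInclusion (A : Set B) : Prop :=
  Nondegenerate A ∧ closSpan {b : B | IsNormalizer A b} = Set.univ

end KM

open KM

variable {B : Type*} [NonUnitalCStarAlgebra B] [PartialOrder B] [StarOrderedRing B]

/-! Closed ideals are determined by their positive elements: `star x * x ∈ J` forces `x ∈ J`,
because an approximate unit `e` of `J` satisfies `x * e ∈ J` and `x * e → x`. So if an ideal `J`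
were strictly larger than the ideal `K` induced by `J ∩ A`, the condition at `K` would apply to some
positive `b ∈ J \ K` and yield `a ∈ F ⊆ A` outside `K` with `a ≼ b` modulo `K`; but this forces
`a ∈ J ∩ A ⊆ K`. Hence the condition at induced ideals makes every ideal of `B` induced. -/

namespace KM

section ClosedLeftIdeals

theorem norm_sub_mul_sq_le {R : Type*} [NonUnitalNormedRing R] [StarRing R] [CStarRing R]
    {e : R} (x : R) (he : IsSelfAdjoint e) (he_norm : ‖e‖ ≤ 1) :
    ‖x - x * e‖ ^ 2 ≤ 2 * ‖star x * x - star x * x * e‖ := by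
  set d := star x * x - star x * x * e with hd
  have star_mul_self_eq : star (x - x * e) * (x - x * e) = d - e * d := by
    simp only [hd, star_sub, star_mul, he.star_eq]
    noncomm_ring
  calc ‖x - x * e‖ ^ 2 = ‖d - e * d‖ := by
        rw [sq, ← CStarRing.norm_star_mul_self, star_mul_self_eq]
    _ ≤ ‖d‖ + ‖e‖ * ‖d‖ := (norm_sub_le _ _).trans (by gcongr; exact norm_mul_le _ _)
    _ ≤ 2 * ‖d‖ := by nlinarith [norm_nonneg d]

variable {R : Type*} [NonUnitalCStarAlgebra R] {L : Submodule ℂ R}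

/-- The `*`-subalgebra `L ∩ L*` attached to a left ideal `L`, which supplies approximate units
inside `L`. A left ideal is encoded as a subspace stable under left multiplication. -/
def starSubalgebraOfLeftIdeal (L : Submodule ℂ R) (hmul : ∀ b, ∀ x ∈ L, b * x ∈ L) :
    NonUnitalStarSubalgebra ℂ R where
  carrier := {x | x ∈ L ∧ star x ∈ L}
  zero_mem' := by simp
  add_mem' hx hy := ⟨L.add_mem hx.1 hy.1, by simpa only [star_add] using L.add_mem hx.2 hy.2⟩
  smul_mem' c _ hx := ⟨L.smul_mem c hx.1, by simpa only [star_smul] using L.smul_mem _ hx.2⟩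
  mul_mem' hx hy := ⟨hmul _ _ hy.1, by simpa only [star_mul] using hmul _ _ hx.2⟩
  star_mem' hx := ⟨hx.2, by simpa only [star_star] using hx.1⟩

theorem isClosed_starSubalgebraOfLeftIdeal (hmul : ∀ b, ∀ x ∈ L, b * x ∈ L)
    (hL : IsClosed (L : Set R)) :
    IsClosed (starSubalgebraOfLeftIdeal L hmul : Set R) :=
  hL.inter (hL.preimage continuous_star)

theorem exists_norm_sub_mul_lt_of_isClosed {S : NonUnitalStarSubalgebra ℂ R}
    (hS : IsClosed (S : Set R)) {h : R} (hh : h ∈ S) {ε : ℝ} (hε : 0 < ε) :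
    ∃ e ∈ S, IsSelfAdjoint e ∧ ‖e‖ ≤ 1 ∧ ‖h - h * e‖ < ε := by
  let _ := NonUnitalStarSubalgebra.nonUnitalCStarAlgebra S (h_closed := hS)
  let _ := CStarAlgebra.spectralOrder S
  have _ := CStarAlgebra.spectralOrderedRing S
  have approxUnit := CStarAlgebra.increasingApproximateUnit S
  have := approxUnit.neBot
  have mul_near : ∀ᶠ e in CStarAlgebra.approximateUnit S, ‖(⟨h, hh⟩ : S) - ⟨h, hh⟩ * e‖ < ε := by
    filter_upwards [(approxUnit.tendsto_mul_left ⟨h, hh⟩).eventually (Metric.ball_mem_nhds _ hε)]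
      with e he
    rwa [← dist_eq_norm, dist_comm]
  obtain ⟨e, he_near, he_self, he_norm⟩ :=
    (mul_near.and (approxUnit.eventually_isSelfAdjoint.and approxUnit.eventually_norm)).exists
  exact ⟨e, e.2, congrArg Subtype.val he_self.star_eq, he_norm, he_near⟩

theorem mem_closedLeftIdeal_of_star_mul_self_mem (hmul : ∀ b, ∀ x ∈ L, b * x ∈ L)
    (hL : IsClosed (L : Set R)) {x : R} (hx : star x * x ∈ L) : x ∈ L := by
  refine hL.closure_subset (Metric.mem_closure_iff.2 fun ε hε ↦ ?_)
  have hx_mem : star x * x ∈ starSubalgebraOfLeftIdeal L hmul :=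
    ⟨hx, by rwa [(IsSelfAdjoint.star_mul_self x).star_eq]⟩
  obtain ⟨e, he, he_self, he_norm, he_near⟩ := exists_norm_sub_mul_lt_of_isClosed
    (isClosed_starSubalgebraOfLeftIdeal hmul hL) hx_mem (half_pos (sq_pos_of_pos hε))
  refine ⟨x * e, hmul x e he.1, dist_eq_norm x _ ▸ lt_of_pow_lt_pow_left₀ 2 hε.le ?_⟩
  linarith [norm_sub_mul_sq_le x he_self he_norm]

end ClosedLeftIdeals

section Ideals

variable {R : Type*} [NonUnitalCStarAlgebra R] {C J S : Set R}

theorem IsIdeal.mem_of_star_mul_self_mem (hJ : IsIdeal J) {x : R} (hx : star x * x ∈ J) :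
    x ∈ J := by
  obtain ⟨-, hclosed, hzero, hadd, hsmul, hmul⟩ := hJ
  let L : Submodule ℂ R :=
    { carrier := J, zero_mem' := hzero, add_mem' := (hadd _ · _ ·), smul_mem' := hsmul }
  have hL_mul : ∀ b, ∀ y ∈ L, b * y ∈ L := fun b y hy ↦ (hmul y hy b trivial).1
  exact mem_closedLeftIdeal_of_star_mul_self_mem hL_mul hclosed hx

theorem IsIdeal.conj_mem (hJ : IsIdeal J) {b : R} (hb : b ∈ J) (x : R) : star x * b * x ∈ J := by
  obtain ⟨-, -, -, -, -, hmul⟩ := hJ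
  exact (hmul _ (hmul b hb (star x) trivial).1 x trivial).2

theorem IsIdeal.star_mul_self_mem (hJ : IsIdeal J) {x : R} (hx : x ∈ J) : star x * x ∈ J := by
  obtain ⟨-, -, -, -, -, hmul⟩ := hJ
  exact (hmul x hx (star x) trivial).1

theorem IsIdealIn.inter_subalgebra (hJ : IsIdealIn C J) {A : NonUnitalSubalgebra ℂ R}
    (hA : IsClosed (A : Set R)) (hAC : (A : Set R) ⊆ C) : IsIdealIn (A : Set R) (J ∩ A) := by
  obtain ⟨-, hclosed, hzero, hadd, hsmul, hmul⟩ := hJ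
  exact ⟨Set.inter_subset_right, hclosed.inter hA, ⟨hzero, A.zero_mem⟩,
    fun x hx y hy ↦ ⟨hadd x hx.1 y hy.1, A.add_mem hx.2 hy.2⟩,
    fun c x hx ↦ ⟨hsmul c x hx.1, SMulMemClass.smul_mem c hx.2⟩,
    fun x hx c hc ↦ ⟨⟨(hmul x hx.1 c (hAC hc)).1, A.mul_mem hc hx.2⟩,
      ⟨(hmul x hx.1 c (hAC hc)).2, A.mul_mem hx.2 hc⟩⟩⟩

theorem isIdeal_sInter {𝒥 : Set (Set R)} (h𝒥 : ∀ J ∈ 𝒥, IsIdeal J) : IsIdeal (⋂₀ 𝒥) := by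
  choose _ hclosed hzero hadd hsmul hmul using h𝒥
  exact ⟨Set.subset_univ _, isClosed_sInter hclosed, hzero,
    fun x hx y hy J hJ ↦ hadd J hJ x (hx J hJ) y (hy J hJ),
    fun c x hx J hJ ↦ hsmul J hJ c x (hx J hJ),
    fun x hx c hc ↦ ⟨fun J hJ ↦ (hmul J hJ x (hx J hJ) c hc).1,
      fun J hJ ↦ (hmul J hJ x (hx J hJ) c hc).2⟩⟩

theorem isIdeal_idealGen (S : Set R) : IsIdeal (idealGen S) :=
  isIdeal_sInter fun _ hJ ↦ hJ.1

theorem subset_idealGen (S : Set R) : S ⊆ idealGen S :=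
  Set.subset_sInter fun _ hJ ↦ hJ.2

theorem idealGen_subset (hJ : IsIdeal J) (hS : S ⊆ J) : idealGen S ⊆ J :=
  Set.sInter_subset_of_mem ⟨hJ, hS⟩

end Ideals

section Supporting

variable {R : Type*} [NonUnitalCStarAlgebra R] {F J K : Set R} {a b : R}

/-- Cuntz subequivalence of the images of `a` and `b` in the quotient by `J`, expressed through
the distance to `J` in place of the quotient norm. -/
def CuntzBelowMod (J : Set R) (a b : R) : Prop :=
  ∀ ε : ℝ, 0 < ε → ∃ x : R, Metric.infDist (a - star x * b * x) J < ε

theorem CuntzBelowMod.mem_of_mem (hab : CuntzBelowMod K a b) (hK : K.Nonempty) (hKJ : K ⊆ J)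
    (hJ : IsIdeal J) (hb : b ∈ J) : a ∈ J := by
  have ⟨_, hclosed, _, hadd, _⟩ := hJ
  refine hclosed.closure_subset (Metric.mem_closure_iff.2 fun ε hε ↦ ?_)
  obtain ⟨x, hx⟩ := hab ε hε
  obtain ⟨z, hzK, hz⟩ := (Metric.infDist_lt_iff hK).1 hx
  refine ⟨z + star x * b * x, hadd z (hKJ hzK) _ (hJ.conj_mem hb x), ?_⟩
  rwa [dist_eq_norm, sub_add_eq_sub_sub_swap, ← dist_eq_norm]

variable [PartialOrder R]

/-- The image of `F` in the quotient by the ideal `J` supports that quotient. -/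
def SupportsMod (J F : Set R) : Prop :=
  ∀ b : R, 0 ≤ b → b ∉ J → ∃ a ∈ F, a ∉ J ∧ CuntzBelowMod J a b

theorem residuallySupports_iff :
    ResiduallySupports F ↔ ∀ J : Set R, IsIdeal J → SupportsMod J F := by
  simp only [ResiduallySupports, ResiduallySupportsIn, SupportsMod, CuntzBelowMod, IsIdeal,
    Set.mem_univ, true_and, forall_const]

variable [StarOrderedRing R]

theorem SupportsMod.eq_of_inter_subset (hF : SupportsMod K F) (hK : IsIdeal K) (hJ : IsIdeal J)
    (hKJ : K ⊆ J) (hFJ : J ∩ F ⊆ K) : K = J := by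
  refine hKJ.antisymm fun y hy ↦ hK.mem_of_star_mul_self_mem ?_
  by_contra hyK
  obtain ⟨a, haF, haK, hay⟩ := hF _ (star_mul_self_nonneg y) hyK
  have haJ : a ∈ J := hay.mem_of_mem ⟨0, hK.2.2.1⟩ hKJ hJ (hJ.star_mul_self_mem hy)
  exact haK (hFJ ⟨haJ, haF⟩)

end Supporting

/-- The closed `*`-subalgebra `A`, bundled as a subalgebra so that `stmt6_general` applies;
closedness and stability under `star` are not part of the bundle. -/
def IsSubCStar.toNonUnitalSubalgebra {R : Type*} [NonUnitalCStarAlgebra R] {A : Set R}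
    (hA : IsSubCStar A) : NonUnitalSubalgebra ℂ R where
  carrier := A
  zero_mem' := hA.2.1
  add_mem' := (hA.2.2.1 _ · _ ·)
  smul_mem' := hA.2.2.2.1
  mul_mem' := (hA.2.2.2.2.1 _ · _ ·)

end KM

theorem stmt6_general {R : Type*} [NonUnitalCStarAlgebra R] [PartialOrder R] [StarOrderedRing R]
    {A : NonUnitalSubalgebra ℂ R} (hA : IsClosed (A : Set R)) {F : Set R} (hFA : F ⊆ A) :
    ResiduallySupports F ↔ ∀ I : Set R, IsIdealIn (A : Set R) I → SupportsMod (idealGen I) F := by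
  rw [residuallySupports_iff]
  refine ⟨fun h I _ ↦ h _ (isIdeal_idealGen I), fun h J hJ ↦ ?_⟩
  have hsupp : SupportsMod (idealGen (J ∩ A)) F :=
    h _ (hJ.inter_subalgebra hA (Set.subset_univ _))
  have hinduced : idealGen (J ∩ A) = J :=
    hsupp.eq_of_inter_subset (isIdeal_idealGen _) hJ (idealGen_subset hJ Set.inter_subset_left)
      ((Set.inter_subset_inter_right J hFA).trans (subset_idealGen _))
  exact hinduced ▸ hsupp

/-- A family `F ⊆ A⁺` residually supports `B` iff for every induced ideal `J = BIB` of `B`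
the image of `F` supports `B/J`. -/
theorem stmt6 (A : Set B) (hA : IsSubCStar A)
    (F : Set B) (hFA : F ⊆ {a : B | a ∈ A ∧ 0 ≤ a}) :
    ResiduallySupports F ↔
      ∀ I : Set B, IsIdealIn A I → ∀ b : B, 0 ≤ b → b ∉ idealGen I →
        ∃ a ∈ F, a ∉ idealGen I ∧ ∀ ε : ℝ, 0 < ε → ∃ x : B,
          Metric.infDist (a - star x * b * x) (idealGen I) < ε :=
  stmt6_general (A := hA.toNonUnitalSubalgebra) hA.1 fun _ ha ↦ (hFA ha).1
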